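/- arXiv:2408.06853 — 3 statements merged into one kernel-verified Lean document; each statement's English description precedes it below -/
import Mathlib

section
/- Let d be a positive integer, μ > 0, a : Fin d → ℝ, and n ∈ ℝ. Let P be the product probability measure on ℝ × (Fin d → ℝ) whose first factor is the centered Gaussian on ℝ with variance (√d+1)/(4μ²) and whose second factor is the product over i ∈ Fin d of centered Gaussians on ℝ with variance (d+√d)/(4μ²). Let T : ℝ × (Fin d → ℝ) → (Fin d → ℝ) × ℝ be T(η, z) = ((fun i => a_i + η + z_i), n + 2η), and let h : (Fin d → ℝ) × ℝ → (Fin (d+1) → ℝ) be the map with h(x̃, ñ)_i = 2·x̃_i − ñ for i < d and h(x̃, ñ)_d = d^{1/4}·ñ. Then the pushforward measure ((P.map T).map h) equals the product over i ∈ Fin (d+1) of Gaussian measures on ℝ with variance (d+√d)/μ² and means g_i, where g_i = 2·a_i − n for i < d and g_d = d^{1/4}·n. -/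
open MeasureTheory ProbabilityTheory

/-!
The last output coordinate of `T` carries exactly the shared noise `2 η` that also appears in
`2 (a i + η + z i)`, so `h ∘ T` decouples: its first `d` coordinates are `g i + 2 z i` and its last
one is `d^{1/4} n + 2 d^{1/4} η`. It is therefore a coordinatewise affine map of independent
Gaussians, and the two variances `4 (d + √d) / (4 μ²)` and `4 √d (√d + 1) / (4 μ²)` both equal
`(d + √d) / μ²`. The equality of measures is checked on measurable boxes.
-/

/-- The image of a centered Gaussian under `x ↦ b + c x`, with the variance given as a real
number. -/
lemma gaussianReal_map_affine (b c v w : ℝ) (hw : c ^ 2 * v = w) :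
    (gaussianReal 0 v.toNNReal).map (fun x => b + c * x) = gaussianReal b w.toNNReal := by
  have hcomp : (fun x : ℝ => b + c * x) = (fun x => b + x) ∘ (fun x => c * x) := rfl
  rw [hcomp, ← Measure.map_map (by fun_prop) (by fun_prop), gaussianReal_map_const_mul,
    gaussianReal_map_const_add, mul_zero, zero_add]
  congr 1
  rw [← hw, Real.toNNReal_mul (sq_nonneg c)]
  congr 1
  ext
  simp [sq_nonneg]

/-- Forward direction of Lemma 3.4: pushing the output distribution of the correlated
Gaussian mechanism (Algorithm 1) through the bijection `h` yields exactly the output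
distribution of the standard spherical Gaussian mechanism applied to the embedded sum `g`,
with per-coordinate variance `(d + √d)/μ²`. -/
theorem stmt_3 (d : ℕ) (hd : 0 < d) (μ : ℝ) (hμ : 0 < μ) (a : Fin d → ℝ) (n : ℝ)
    (P : Measure (ℝ × (Fin d → ℝ)))
    (hP : P = (gaussianReal 0 (((Real.sqrt d + 1) / (4 * μ ^ 2)).toNNReal)).prod
      (Measure.pi fun _ : Fin d =>
        gaussianReal 0 ((((d : ℝ) + Real.sqrt d) / (4 * μ ^ 2)).toNNReal)))
    (T : ℝ × (Fin d → ℝ) → (Fin d → ℝ) × ℝ)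
    (hT : T = fun p => ((fun i => a i + p.1 + p.2 i), n + 2 * p.1))
    (h : (Fin d → ℝ) × ℝ → (Fin (d + 1) → ℝ))
    (hh : h = fun q =>
      Fin.snoc (fun i => 2 * q.1 i - q.2) ((d : ℝ) ^ ((1 : ℝ) / 4) * q.2))
    (g : Fin (d + 1) → ℝ)
    (hg : g = Fin.snoc (fun i => 2 * a i - n) ((d : ℝ) ^ ((1 : ℝ) / 4) * n)) :
    (P.map T).map h =
      Measure.pi fun i : Fin (d + 1) =>
        gaussianReal (g i) ((((d : ℝ) + Real.sqrt d) / μ ^ 2).toNNReal) := by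
  subst hP hT hh hg
  set c : ℝ := (d : ℝ) ^ ((1 : ℝ) / 4) with hc
  have hd0 : (0 : ℝ) ≤ d := Nat.cast_nonneg d
  have hc2 : c ^ 2 = Real.sqrt d := by
    rw [hc, ← Real.rpow_natCast, ← Real.rpow_mul hd0, Real.sqrt_eq_rpow]
    norm_num
  have hsq : Real.sqrt d * Real.sqrt d = d := Real.mul_self_sqrt hd0
  have hZ (i : Fin d) := gaussianReal_map_affine (2 * a i - n) 2
    (((d : ℝ) + Real.sqrt d) / (4 * μ ^ 2)) (((d : ℝ) + Real.sqrt d) / μ ^ 2)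
    (by field_simp; ring)
  have hη := gaussianReal_map_affine (c * n) (2 * c)
    ((Real.sqrt d + 1) / (4 * μ ^ 2)) (((d : ℝ) + Real.sqrt d) / μ ^ 2) (by
      rw [mul_pow, hc2]
      field_simp
      linear_combination 4 * hsq)
  have hmeas : Measurable fun q : (Fin d → ℝ) × ℝ =>
      (Fin.snoc (fun i => 2 * q.1 i - q.2) (c * q.2) : Fin (d + 1) → ℝ) := by
    refine measurable_pi_lambda _ fun i => ?_
    refine Fin.lastCases ?_ (fun i => ?_) i
    · simp only [Fin.snoc_last]; fun_prop
    · simp only [Fin.snoc_castSucc]; fun_prop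
  rw [Measure.map_map hmeas (by fun_prop)]
  symm
  refine Measure.pi_eq fun s hs => ?_
  rw [Measure.map_apply (hmeas.comp (by fun_prop)) (MeasurableSet.univ_pi hs)]
  -- The shared noise `2 η` cancels, so the preimage of a box is a box.
  have hpre : ((fun q : (Fin d → ℝ) × ℝ =>
        (Fin.snoc (fun i => 2 * q.1 i - q.2) (c * q.2) : Fin (d + 1) → ℝ)) ∘
        fun p : ℝ × (Fin d → ℝ) => ((fun i => a i + p.1 + p.2 i), n + 2 * p.1)) ⁻¹'
        Set.univ.pi s =
      ((fun x => c * n + 2 * c * x) ⁻¹' s (Fin.last d)) ×ˢ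
        Set.univ.pi fun i : Fin d =>
          (fun x => (2 * a i - n) + 2 * x) ⁻¹' s i.castSucc := by
    ext ⟨x, z⟩
    have e1 : c * (n + 2 * x) = c * n + 2 * c * x := by ring
    have e2 (i : Fin d) : 2 * (a i + x + z i) - (n + 2 * x) = (2 * a i - n) + 2 * z i := by ring
    simp only [Set.mem_preimage, Set.mem_univ_pi, Set.mem_prod, Function.comp_apply,
      Fin.forall_fin_succ', Fin.snoc_castSucc, Fin.snoc_last, e1, e2]
    exact and_comm
  rw [hpre, Measure.prod_prod, Measure.pi_pi, Fin.prod_univ_castSucc, mul_comm]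
  simp only [Fin.snoc_castSucc, Fin.snoc_last]
  rw [← hη, Measure.map_apply (by fun_prop) (hs _)]
  congr 1
  refine Finset.prod_congr rfl fun i _ => ?_
  rw [← hZ i, Measure.map_apply (by fun_prop) (hs _)]
end

section
/- Let d be a positive integer, μ > 0, a : Fin d → ℝ, and n ∈ ℝ. Define g : Fin (d+1) → ℝ by g_i = 2·a_i − n for i < d and g_d = d^{1/4}·n, and let Q be the product over i ∈ Fin (d+1) of Gaussian measures on ℝ with mean g_i and variance (d+√d)/μ². Let h' : (Fin (d+1) → ℝ) → (Fin d → ℝ) × ℝ be the map h'(y) = ((fun i => y_i/2 + y_d/(2·d^{1/4})), y_d/d^{1/4}). Then the pushforward Q.map h' equals the pushforward (P.map T), where P is the product probability measure on ℝ × (Fin d → ℝ) whose first factor is the centered Gaussian with variance (√d+1)/(4μ²) and whose second factor is the product of d centered Gaussians with variance (d+√d)/(4μ²), and T(η, z) = ((fun i => a_i + η + z_i), n + 2η). -/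
/-!
The standardization `ψ y = (y_d / (2 d^{1/4}) - n / 2, (y_i / 2 - (a_i - n / 2))_i)` acts
coordinatewise, so it carries the product Gaussian `Q` to a product of centered Gaussians. Since
the squared scale of the last coordinate is `4 √d`, its variance becomes
`(d + √d) / (4 √d μ²) = (√d + 1) / (4 μ²)`, and the image is exactly `P`
(`measurePreserving_gaussian_standardize`). As `h' = T ∘ ψ` pointwise, the two pushforwards agree.
-/


open MeasureTheory ProbabilityTheory

/-- Scaling by `1 / c` and then recentering maps a Gaussian to a centered Gaussian. Variances are
real parameters, so that the variance identity to be checked lives in `ℝ`, not in `ℝ≥0`. -/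
lemma measurePreserving_gaussian_standardize {c b m v w : ℝ} (hm : m / c = b)
    (hv : 0 ≤ v) (hw : v / c ^ 2 = w) :
    MeasurePreserving (fun y : ℝ => y / c - b) (gaussianReal m v.toNNReal)
      (gaussianReal 0 w.toNNReal) := by
  refine ⟨by fun_prop, ?_⟩
  have h1 : (fun y : ℝ => y / c - b) = (fun y => y - b) ∘ (fun y => y / c) := rfl
  rw [h1, ← Measure.map_map (by fun_prop) (by fun_prop), gaussianReal_map_div_const,
    gaussianReal_map_sub_const, hm, sub_self]
  congr 1
  ext
  rw [← hw]
  simp [hv, div_nonneg hv (sq_nonneg c)]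

/-- Backward direction of Lemma 3.4: post-processing the standard Gaussian mechanism on the
`(d+1)`-dimensional embedding `g` by the map `h'` recovers exactly the output distribution of
the correlated Gaussian mechanism (Algorithm 1). -/
theorem stmt_4 (d : ℕ) (hd : 0 < d) (μ : ℝ) (hμ : 0 < μ) (a : Fin d → ℝ) (n : ℝ)
    (g : Fin (d + 1) → ℝ)
    (hg : g = Fin.snoc (fun i => 2 * a i - n) ((d : ℝ) ^ ((1 : ℝ) / 4) * n))
    (Q : Measure (Fin (d + 1) → ℝ))
    (hQ : Q = Measure.pi fun i : Fin (d + 1) =>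
      gaussianReal (g i) ((((d : ℝ) + Real.sqrt d) / μ ^ 2).toNNReal))
    (h' : (Fin (d + 1) → ℝ) → (Fin d → ℝ) × ℝ)
    (hh' : h' = fun y =>
      ((fun i : Fin d => y i.castSucc / 2 + y (Fin.last d) / (2 * (d : ℝ) ^ ((1 : ℝ) / 4))),
        y (Fin.last d) / (d : ℝ) ^ ((1 : ℝ) / 4)))
    (P : Measure (ℝ × (Fin d → ℝ)))
    (hP : P = (gaussianReal 0 (((Real.sqrt d + 1) / (4 * μ ^ 2)).toNNReal)).prod
      (Measure.pi fun _ : Fin d =>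
        gaussianReal 0 ((((d : ℝ) + Real.sqrt d) / (4 * μ ^ 2)).toNNReal)))
    (T : ℝ × (Fin d → ℝ) → (Fin d → ℝ) × ℝ)
    (hT : T = fun p => ((fun i => a i + p.1 + p.2 i), n + 2 * p.1)) :
    Q.map h' = P.map T := by
  have hd' : (0 : ℝ) < d := by exact_mod_cast hd
  set c : ℝ := (d : ℝ) ^ ((1 : ℝ) / 4) with hc
  have hc0 : 0 < c := Real.rpow_pos_of_pos hd' _
  have hc2 : c ^ 2 = √(d : ℝ) := by
    rw [hc, ← Real.rpow_natCast, ← Real.rpow_mul hd'.le, Real.sqrt_eq_rpow]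
    norm_num
  have hs0 : 0 < √(d : ℝ) := Real.sqrt_pos.2 hd'
  have hs2 : √(d : ℝ) ^ 2 = d := Real.sq_sqrt hd'.le
  have hv : 0 ≤ ((d : ℝ) + √d) / μ ^ 2 := by positivity
  have hlast : MeasurePreserving (fun y : ℝ => y / (2 * c) - n / 2)
      (gaussianReal (g (Fin.last d)) (((d : ℝ) + √d) / μ ^ 2).toNNReal)
      (gaussianReal 0 ((√(d : ℝ) + 1) / (4 * μ ^ 2)).toNNReal) := by
    refine measurePreserving_gaussian_standardize ?_ hv ?_
    · simp only [hg, Fin.snoc_last]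
      field_simp
    · rw [mul_pow, hc2]
      field_simp
      linear_combination (-4 : ℝ) * hs2
  have hinit : MeasurePreserving (fun (y : Fin d → ℝ) i => y i / 2 - (a i - n / 2))
      (Measure.pi fun i : Fin d =>
        gaussianReal (g ((Fin.last d).succAbove i)) (((d : ℝ) + √d) / μ ^ 2).toNNReal)
      (Measure.pi fun _ : Fin d =>
        gaussianReal 0 (((d : ℝ) + √d) / (4 * μ ^ 2)).toNNReal) := by
    refine measurePreserving_pi (f := fun i y => y / 2 - (a i - n / 2)) _ _ fun i => ?_
    refine measurePreserving_gaussian_standardize (c := 2) ?_ hv ?_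
    · simp only [hg, Fin.succAbove_last, Fin.snoc_castSucc]
      ring
    · field_simp
      norm_num
  have hψ := (hlast.prod hinit).comp (measurePreserving_piFinSuccAbove
    (fun i : Fin (d + 1) => gaussianReal (g i) (((d : ℝ) + √d) / μ ^ 2).toNNReal) (Fin.last d))
  rw [← hQ, ← hP] at hψ
  have hTm : Measurable T := by
    rw [hT]
    fun_prop
  rw [← hψ.map_eq, Measure.map_map hTm hψ.measurable]
  congr 1
  funext y
  rw [hh', hT]
  refine Prod.ext (funext fun i => ?_) ?_
  · simp [MeasurableEquiv.piFinSuccAbove, Fin.insertNthEquiv, Fin.init]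
    ring
  · simp [MeasurableEquiv.piFinSuccAbove, Fin.insertNthEquiv]
    field_simp
    ring
end

section
/- Let m and d be positive integers. For a row index j ∈ Fin m and a vector r : Fin d → ℝ with entries in [0,1], define the matrix E(j, r) : Fin m → Fin (d+1) → ℝ by E(j, r)_{j,k} = 2·r_k − 1 for k < d, E(j, r)_{j,d} = √d, and E(j, r)_{j',k} = 0 for every row j' ≠ j. Then for all j, j' ∈ Fin m and all r, r' ∈ [0,1]^d, the Frobenius norm √(Σ_{p,q} (E(j, r)_{p,q} − E(j', r')_{p,q})²) is at most 2√d. -/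
/-!
Write `v(r) = (2r₁ - 1, …, 2r_d - 1, √d)` for the nonzero row of `E(j, r)`. If both points
use the same row, the last coordinates cancel and each of the other `d` coordinates of
`v(r) - v(r')` is `2 (r_k - r'_k)`, of square at most `4`. If the rows differ, the two
supports are disjoint, so the squared distance is `‖v(r)‖² + ‖v(r')‖²`, and each of these is
at most `d + d`. In both cases the squared distance is at most `4d = (2√d)²`.
-/

/-- The squared Euclidean norm of the embedded row `(2r₁ - 1, …, 2r_d - 1, √d)` is at
most `2d`: the first `d` coordinates lie in `[-1, 1]`, and the last one contributes `d`. -/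
lemma sum_sq_row_le (d : ℕ) (r : Fin d → ℝ) (hr : ∀ k, r k ∈ Set.Icc (0 : ℝ) 1) :
    ∑ q, ((Fin.snoc (fun k => 2 * r k - 1) (Real.sqrt d) : Fin (d + 1) → ℝ) q) ^ 2
      ≤ 2 * d := by
  rw [Fin.sum_univ_castSucc]
  simp only [Fin.snoc_castSucc, Fin.snoc_last]
  rw [Real.sq_sqrt (Nat.cast_nonneg d)]
  have h : ∑ k, (2 * r k - 1) ^ 2 ≤ ∑ _k : Fin d, (1 : ℝ) :=
    Finset.sum_le_sum fun k _ => by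
      obtain ⟨h0, h1⟩ := hr k
      nlinarith [mul_nonneg h0 (sub_nonneg.2 h1)]
  simp only [Finset.sum_const, Finset.card_univ, Fintype.card_fin, nsmul_eq_mul,
    mul_one] at h
  linarith

/-- Two embedded rows are at squared Euclidean distance at most `4d`; their last
coordinates cancel. -/
lemma sum_sq_row_sub_le (d : ℕ) (r r' : Fin d → ℝ)
    (hr : ∀ k, r k ∈ Set.Icc (0 : ℝ) 1) (hr' : ∀ k, r' k ∈ Set.Icc (0 : ℝ) 1) :
    ∑ q, ((Fin.snoc (fun k => 2 * r k - 1) (Real.sqrt d) : Fin (d + 1) → ℝ) q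
      - (Fin.snoc (fun k => 2 * r' k - 1) (Real.sqrt d) : Fin (d + 1) → ℝ) q) ^ 2
      ≤ 4 * d := by
  rw [Fin.sum_univ_castSucc]
  simp only [Fin.snoc_castSucc, Fin.snoc_last]
  have h : ∑ k, (2 * r k - 1 - (2 * r' k - 1)) ^ 2 ≤ ∑ _k : Fin d, (4 : ℝ) :=
    Finset.sum_le_sum fun k _ => by
      obtain ⟨h0, h1⟩ := hr k
      obtain ⟨h0', h1'⟩ := hr' k
      have : |2 * r k - 1 - (2 * r' k - 1)| ≤ 2 := abs_le.2 ⟨by linarith, by linarith⟩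
      nlinarith [sq_le_sq' (abs_le.1 this).1 (abs_le.1 this).2]
  simp only [Finset.sum_const, Finset.card_univ, Fintype.card_fin, nsmul_eq_mul] at h
  linarith [sub_self (Real.sqrt d), h, show (Real.sqrt d - Real.sqrt d) ^ 2 = 0 by simp]

/-- Sensitivity computation in the proof of Lemma 4.2: the embedding
`E(j, r) ∈ ℝ^{m×(d+1)}` places `(2r₁ - 1, …, 2r_d - 1, √d)` in row `j` and zeros
elsewhere; the Frobenius distance between any two embedded points is at most `2√d`. -/
theorem stmt_10 (m d : ℕ) (hm : 0 < m) (hd : 0 < d)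
    (E : Fin m → (Fin d → ℝ) → Fin m → Fin (d + 1) → ℝ)
    (hE : E = fun j r p =>
      if p = j then Fin.snoc (fun k => 2 * r k - 1) (Real.sqrt d) else fun _ => 0) :
    ∀ (j j' : Fin m) (r r' : Fin d → ℝ),
      (∀ k, r k ∈ Set.Icc (0 : ℝ) 1) → (∀ k, r' k ∈ Set.Icc (0 : ℝ) 1) →
      Real.sqrt (∑ p, ∑ q, (E j r p q - E j' r' p q) ^ 2) ≤ 2 * Real.sqrt d := by
  intro j j' r r' hr hr'
  have key : ∑ p, ∑ q, (E j r p q - E j' r' p q) ^ 2 ≤ 4 * (d : ℝ) := by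
    subst hE
    set v : Fin (d + 1) → ℝ := Fin.snoc (fun k => 2 * r k - 1) (Real.sqrt d) with hv
    set w : Fin (d + 1) → ℝ := Fin.snoc (fun k => 2 * r' k - 1) (Real.sqrt d) with hw
    by_cases hj : j = j'
    · subst hj
      have e : ∀ p : Fin m, ∑ q, ((if p = j then v else fun _ => 0) q
          - (if p = j then w else fun _ => 0) q) ^ 2
          = if p = j then ∑ q, (v q - w q) ^ 2 else 0 := by
        intro p
        split_ifs <;> simp
      calc _ = ∑ p : Fin m, (if p = j then ∑ q, (v q - w q) ^ 2 else 0) :=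
            Finset.sum_congr rfl fun p _ => e p
        _ = ∑ q, (v q - w q) ^ 2 := by simp
        _ ≤ 4 * d := sum_sq_row_sub_le d r r' hr hr'
    · have e : ∀ p : Fin m, ∑ q, ((if p = j then v else fun _ => 0) q
          - (if p = j' then w else fun _ => 0) q) ^ 2
          = (if p = j then ∑ q, v q ^ 2 else 0) + (if p = j' then ∑ q, w q ^ 2 else 0) := by
        intro p
        split_ifs with h1 h2
        · exact absurd (h1.symm.trans h2) hj
        all_goals simp
      calc _ = ∑ p : Fin m, ((if p = j then ∑ q, v q ^ 2 else 0)
              + (if p = j' then ∑ q, w q ^ 2 else 0)) :=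
            Finset.sum_congr rfl fun p _ => e p
        _ = ∑ q, v q ^ 2 + ∑ q, w q ^ 2 := by simp [Finset.sum_add_distrib]
        _ ≤ 2 * d + 2 * d := add_le_add (sum_sq_row_le d r hr) (sum_sq_row_le d r' hr')
        _ = 4 * d := by ring
  refine Real.sqrt_le_iff.2 ⟨by positivity, key.trans_eq ?_⟩
  rw [mul_pow, Real.sq_sqrt (Nat.cast_nonneg d)]
  norm_num
end
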